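/- Let t₁,…,t_m be pairwise distinct real numbers, and let Σ be the 2m × 2m real symmetric matrix with block entries Σ₁₁(j,l) = sc(t_l − t_j), Σ₁₂(j,l) = sc'(t_l − t_j), Σ₂₁(j,l) = −sc'(t_l − t_j), and Σ₂₂(j,l) = −sc''(t_l − t_j), where sc(x) = sin(x)/x. Then Σ is positive definite (in particular invertible). -/

import Mathlib

noncomputable def sc (x : ℝ) : ℝ := if x = 0 then 1 else Real.sin x / x

open Filter Topology MeasureTheory Set

/-- Differentiation under the integral sign for kernels with globally bounded derivative. -/
lemma hasDerivAt_integral_of_continuous_of_bound {F F' : ℝ → ℝ → ℝ}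
    (hF : ∀ x, Continuous (F x)) (hF' : ∀ x, Continuous (F' x))
    (hd : ∀ x l, HasDerivAt (fun y => F y l) (F' x l) x)
    (hb : ∀ x, ∀ l ∈ Ioc (0 : ℝ) 1, |F' x l| ≤ 1) (x : ℝ) :
    HasDerivAt (fun y => ∫ l in (0 : ℝ)..1, F y l) (∫ l in (0 : ℝ)..1, F' x l) x := by
  refine (intervalIntegral.hasDerivAt_integral_of_dominated_loc_of_deriv_le
    (F := F) (F' := F') (bound := fun _ => 1) (s := univ) univ_mem
    (Eventually.of_forall fun y => (hF y).aestronglyMeasurable)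
    ((hF x).intervalIntegrable _ _) (hF' x).aestronglyMeasurable
    (Eventually.of_forall fun l hl y _ => ?_) (by simp)
    (Eventually.of_forall fun l _ y _ => hd y l)).2
  rw [uIoc_of_le zero_le_one] at hl
  exact hb y l hl

lemma sc_eq_integral (x : ℝ) : sc x = ∫ l in (0 : ℝ)..1, Real.cos (l * x) := by
  unfold sc
  split_ifs with h
  · simp [h]
  · rw [intervalIntegral.integral_comp_mul_right _ h]
    simp [div_eq_inv_mul]

lemma deriv_sc_eq_integral (x : ℝ) :
    deriv sc x = ∫ l in (0 : ℝ)..1, -(l * Real.sin (l * x)) := by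
  rw [funext sc_eq_integral]
  refine (hasDerivAt_integral_of_continuous_of_bound (F := fun x l => Real.cos (l * x))
    (F' := fun x l => -(l * Real.sin (l * x)))
    (fun x => by fun_prop) (fun x => by fun_prop) (fun x l => ?_) (fun x l hl => ?_) x).deriv
  · exact ((hasDerivAt_id' x).const_mul l).cos.congr_deriv (by ring)
  · rw [abs_neg, abs_mul, abs_of_pos hl.1]
    exact mul_le_one₀ hl.2 (abs_nonneg _) (Real.abs_sin_le_one _)

lemma deriv_deriv_sc_eq_integral (x : ℝ) :
    deriv (deriv sc) x = ∫ l in (0 : ℝ)..1, -(l * (l * Real.cos (l * x))) := by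
  rw [funext deriv_sc_eq_integral]
  refine (hasDerivAt_integral_of_continuous_of_bound (F := fun x l => -(l * Real.sin (l * x)))
    (F' := fun x l => -(l * (l * Real.cos (l * x))))
    (fun x => by fun_prop) (fun x => by fun_prop) (fun x l => ?_) (fun x l hl => ?_) x).deriv
  · exact (((hasDerivAt_id' x).const_mul l).sin.const_mul l).neg.congr_deriv (by ring)
  · rw [abs_neg, abs_mul, abs_mul, abs_of_pos hl.1]
    exact mul_le_one₀ hl.2 (by have := hl.1; positivity)
      (mul_le_one₀ hl.2 (abs_nonneg _) (Real.abs_cos_le_one _))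

/-- The Gram matrix of a finite family of pairs of continuous functions on `[0, 1]` is positive
definite as soon as no nontrivial combination of the family vanishes on `[0, 1]`. -/
lemma posDef_integral_gram {ι : Type*} [Fintype ι] (M : Matrix ι ι ℝ) (u v : ι → ℝ → ℝ)
    (hu : ∀ i, Continuous (u i)) (hv : ∀ i, Continuous (v i))
    (hM : ∀ i j, M i j = ∫ l in (0 : ℝ)..1, (u i l * u j l + v i l * v j l))
    (hli : ∀ x : ι → ℝ, (∀ l ∈ Icc (0 : ℝ) 1, ∑ i, x i * u i l = 0 ∧ ∑ i, x i * v i l = 0) →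
      x = 0) : M.PosDef := by
  refine Matrix.PosDef.of_dotProduct_mulVec_pos ?_ fun x hx => ?_
  · ext i j
    simp [hM, mul_comm]
  · have key : star x ⬝ᵥ (M.mulVec x) =
        ∫ l in (0 : ℝ)..1, ((∑ i, x i * u i l) ^ 2 + (∑ i, x i * v i l) ^ 2) := by
      have : ∀ l, (∑ i, x i * u i l) ^ 2 + (∑ i, x i * v i l) ^ 2 =
          ∑ i, ∑ j, x i * x j * (u i l * u j l + v i l * v j l) := fun l => by
        rw [sq, sq, Finset.sum_mul_sum, Finset.sum_mul_sum, ← Finset.sum_add_distrib]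
        refine Finset.sum_congr rfl fun i _ => ?_
        rw [← Finset.sum_add_distrib]
        exact Finset.sum_congr rfl fun j _ => by ring
      simp_rw [this]
      rw [intervalIntegral.integral_finsetSum
        fun i _ => Continuous.intervalIntegrable (by fun_prop) _ _]
      simp only [dotProduct, Matrix.mulVec, Finset.mul_sum]
      refine Finset.sum_congr rfl fun i _ => ?_
      rw [intervalIntegral.integral_finsetSum
        fun j _ => Continuous.intervalIntegrable (by fun_prop) _ _]
      refine Finset.sum_congr rfl fun j _ => ?_
      rw [intervalIntegral.integral_const_mul, hM]
      simp; ring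
    rw [key]
    refine intervalIntegral.integral_pos zero_lt_one
      (Continuous.continuousOn (by fun_prop)) (fun l _ => by positivity) ?_
    by_contra! h
    refine hx (hli x fun l hl => ?_)
    have := h l hl
    constructor <;> nlinarith [sq_nonneg (∑ i, x i * u i l), sq_nonneg (∑ i, x i * v i l)]

/-- Exponentials with distinct real rates are linearly independent over affine functions. -/
lemma eq_zero_of_sum_affine_mul_exp_eq_zero {ι : Type*} [Fintype ι] {t : ι → ℝ}
    (ht : Function.Injective t) (a b : ι → ℝ)
    (h : ∀ x : ℝ, ∑ j, (a j + x * b j) * Real.exp (x * t j) = 0) (j : ι) :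
    a j = 0 ∧ b j = 0 := by
  classical
  by_contra hj
  obtain ⟨k, hk, hmax⟩ := Finset.exists_max_image
    (Finset.univ.filter fun j => ¬(a j = 0 ∧ b j = 0)) t ⟨j, by simpa using hj⟩
  simp only [Finset.mem_filter, Finset.mem_univ, true_and] at hk hmax
  have hterm : ∀ i ∈ Finset.univ.erase k,
      Tendsto (fun x : ℝ => (a i + x * b i) * Real.exp (x * (t i - t k))) atTop (𝓝 0) := by
    intro i hi
    by_cases hi0 : a i = 0 ∧ b i = 0
    · simp [hi0]
    have hlt : 0 < t k - t i := sub_pos.2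
      (lt_of_le_of_ne (hmax i hi0) fun e => (Finset.mem_erase.1 hi).1 (ht e))
    have hs : Tendsto (fun x : ℝ => x * (t k - t i)) atTop atTop :=
      tendsto_id.atTop_mul_const hlt
    have h0 := ((Real.tendsto_pow_mul_exp_neg_atTop_nhds_zero 0).comp hs).const_mul (a i)
    have h1 := ((Real.tendsto_pow_mul_exp_neg_atTop_nhds_zero 1).comp hs).const_mul
      (b i / (t k - t i))
    convert h0.add h1 using 1
    · ext x
      have : x * (t i - t k) = -(x * (t k - t i)) := by ring
      simp only [Function.comp, this]
      field_simp
    · simp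
  have hlim : Tendsto (fun x : ℝ => a k + x * b k) atTop (𝓝 0) := by
    have hs := (tendsto_finsetSum _ hterm).neg
    simp only [Finset.sum_const_zero, neg_zero] at hs
    refine hs.congr fun x => ?_
    have h' : ∑ i, (a i + x * b i) * Real.exp (x * (t i - t k)) = 0 := by
      have := congrArg (· * Real.exp (-(x * t k))) (h x)
      simp only [Finset.sum_mul, zero_mul] at this
      rw [← this]
      refine Finset.sum_congr rfl fun i _ => ?_
      rw [mul_assoc, ← Real.exp_add]
      ring_nf
    rw [← Finset.add_sum_erase _ _ (Finset.mem_univ k)] at h'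
    simp only [sub_self, mul_zero, Real.exp_zero, mul_one] at h'
    linarith
  have hb : b k = 0 := by
    have h1 := (hlim.comp (tendsto_atTop_add_const_right atTop (1 : ℝ) tendsto_id)).sub hlim
    refine tendsto_nhds_unique (tendsto_const_nhds.congr fun x => ?_) (h1.trans (by simp))
    simp only [Function.comp, id]
    ring
  simp only [hb, mul_zero, add_zero] at hlim
  exact hk ⟨tendsto_nhds_unique tendsto_const_nhds hlim, hb⟩

lemma eq_zero_of_sum_affine_mul_cexp_eq_zero {ι : Type*} [Fintype ι] {t : ι → ℝ}
    (ht : Function.Injective t) (a b : ι → ℝ)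
    (h : ∀ l ∈ Icc (0 : ℝ) 1,
      ∑ j, ((a j : ℂ) + l * Complex.I * b j) * Complex.exp (l * Complex.I * t j) = 0) (j : ι) :
    a j = 0 ∧ b j = 0 := by
  set f : ℂ → ℂ := fun z => ∑ j, ((a j : ℂ) + z * b j) * Complex.exp (z * t j) with hf
  have hfa : AnalyticOnNhd ℂ f univ := Differentiable.differentiableOn (by fun_prop)
    |>.analyticOnNhd isOpen_univ
  have hacc : ∃ᶠ z in 𝓝[≠] (0 : ℂ), f z = 0 := by
    have ht : Tendsto (fun l : ℝ => (l : ℂ) * Complex.I) (𝓝[>] 0) (𝓝[≠] 0) := by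
      refine tendsto_nhdsWithin_iff.2 ⟨?_, ?_⟩
      · have : Continuous fun l : ℝ => (l : ℂ) * Complex.I := by fun_prop
        simpa using (this.tendsto 0).mono_left nhdsWithin_le_nhds
      · filter_upwards [self_mem_nhdsWithin] with l hl
        simpa using (ne_of_gt hl : l ≠ 0)
    refine ht.frequently (Eventually.frequently ?_)
    filter_upwards [Ioo_mem_nhdsGT (zero_lt_one' ℝ)] with l hl
    exact h l (Ioo_subset_Icc_self hl)
  have hzero := hfa.eqOn_zero_of_preconnected_of_frequently_eq_zero isPreconnected_univ
    (mem_univ 0) hacc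
  refine eq_zero_of_sum_affine_mul_exp_eq_zero ht a b (fun x => ?_) j
  have := hzero (mem_univ (x : ℂ))
  simp only [hf, Pi.zero_apply] at this
  exact_mod_cast this

theorem stmt9 (m : ℕ) (t : Fin m → ℝ) (ht : Function.Injective t) :
    (Matrix.of (fun i j : Fin m ⊕ Fin m =>
      match i, j with
      | Sum.inl j', Sum.inl l => sc (t l - t j')
      | Sum.inl j', Sum.inr l => deriv sc (t l - t j')
      | Sum.inr j', Sum.inl l => - deriv sc (t l - t j')
      | Sum.inr j', Sum.inr l => - deriv (deriv sc) (t l - t j'))).PosDef := by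
  refine posDef_integral_gram _
    (Sum.elim (fun j l => Real.cos (l * t j)) fun j l => -(l * Real.sin (l * t j)))
    (Sum.elim (fun j l => Real.sin (l * t j)) fun j l => l * Real.cos (l * t j))
    ?_ ?_ ?_ fun x hx => ?_
  · rintro (j | j) <;> simp only [Sum.elim_inl, Sum.elim_inr] <;> fun_prop
  · rintro (j | j) <;> simp only [Sum.elim_inl, Sum.elim_inr] <;> fun_prop
  · rintro (i | i) (j | j) <;>
      simp only [Matrix.of_apply, Sum.elim_inl, Sum.elim_inr, deriv_deriv_sc_eq_integral] <;>
      simp only [sc_eq_integral, deriv_sc_eq_integral, ← intervalIntegral.integral_neg,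
        mul_sub, Real.cos_sub, Real.sin_sub] <;>
      congr 1 <;> ext l <;> ring
  · have hab := eq_zero_of_sum_affine_mul_cexp_eq_zero ht (fun j => x (Sum.inl j))
      (fun j => x (Sum.inr j)) fun l hl => by
        obtain ⟨h1, h2⟩ := hx l hl
        simp only [Fintype.sum_sum_type, Sum.elim_inl, Sum.elim_inr,
          ← Finset.sum_add_distrib] at h1 h2
        have h3 : ∀ j, ((x (Sum.inl j) : ℂ) + l * Complex.I * x (Sum.inr j)) *
            Complex.exp (l * Complex.I * t j) =
            ((x (Sum.inl j) * Real.cos (l * t j) + x (Sum.inr j) * -(l * Real.sin (l * t j)) :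
              ℝ) : ℂ) +
            ((x (Sum.inl j) * Real.sin (l * t j) + x (Sum.inr j) * (l * Real.cos (l * t j)) :
              ℝ) : ℂ) * Complex.I := fun j => by
          rw [show (l : ℂ) * Complex.I * t j = ((l * t j : ℝ) : ℂ) * Complex.I by
            push_cast; ring, Complex.exp_mul_I, ← Complex.ofReal_cos, ← Complex.ofReal_sin]
          push_cast
          linear_combination (l : ℂ) * x (Sum.inr j) * Complex.sin (l * t j) * Complex.I_sq
        rw [Finset.sum_congr rfl fun j _ => h3 j, Finset.sum_add_distrib, ← Finset.sum_mul,
          ← Complex.ofReal_sum, ← Complex.ofReal_sum, h1, h2]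
        simp
    ext (j | j)
    exacts [(hab j).1, (hab j).2]
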